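/- arXiv:1909.02929 — 2 statements merged into one kernel-verified Lean document; each statement's English description precedes it below -/
import Mathlib

section
/- Let X be a real random variable on a probability space such that X ≥ x̄ almost surely for some constant x̄ > 0, and such that X is integrable. Then for every c > 0 the random variable log Γ(X + c) − log Γ(X) is integrable, i.e. E|log Γ(X+c) − log Γ(X)| < ∞. -/
open MeasureTheory

/-!
Since `log Γ` is convex and has increment `log x` over `[x, x + 1]`, its increment over
`[x, x + c]` is at most `c * log (x + c)`, and its increment over `[x + 1, x + 1 + c]` is at least
`c * log x`. By the functional equation these two increments differ by `log (x + c) - log x`, so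
`log Γ(x + c) - log Γ(x)` is squeezed between linear combinations of `log x` and `log (x + c)`.
Both are integrable at `x = X` as soon as `log X` is, because `log⁺` is subadditive up to `log 2`.
-/

section GammaIncrement

variable {x c : ℝ}

theorem log_Gamma_add_one (hx : 0 < x) :
    Real.log (Real.Gamma (x + 1)) = Real.log x + Real.log (Real.Gamma x) := by
  rw [Real.Gamma_add_one hx.ne', Real.log_mul hx.ne' (Real.Gamma_pos_of_pos hx).ne']

theorem log_Gamma_add_sub_log_Gamma_le (hx : 0 < x) (hc : 0 < c) :
    Real.log (Real.Gamma (x + c)) - Real.log (Real.Gamma x) ≤ c * Real.log (x + c) := by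
  have hxc : 0 < x + c := add_pos hx hc
  have hslope := Real.convexOn_log_Gamma.slope_mono_adjacent hx (add_pos hxc one_pos)
    (lt_add_of_pos_right x hc) (lt_add_one (x + c))
  simp only [Function.comp_apply, log_Gamma_add_one hxc, add_sub_cancel_left,
    add_sub_cancel_right, div_one] at hslope
  exact (div_le_iff₀' hc).mp hslope

theorem mul_log_le_log_Gamma_add_one_add_sub (hx : 0 < x) (hc : 0 < c) :
    c * Real.log x ≤ Real.log (Real.Gamma (x + 1 + c)) - Real.log (Real.Gamma (x + 1)) := by
  have hx1 : 0 < x + 1 := add_pos hx one_pos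
  have hslope := Real.convexOn_log_Gamma.slope_mono_adjacent hx (add_pos hx1 hc)
    (lt_add_one x) (lt_add_of_pos_right (x + 1) hc)
  rw [add_sub_cancel_left, add_sub_cancel_left, div_one, le_div_iff₀' hc] at hslope
  simpa only [Function.comp_apply, log_Gamma_add_one hx, add_sub_cancel_right] using hslope

theorem le_log_Gamma_add_sub_log_Gamma (hx : 0 < x) (hc : 0 < c) :
    (c + 1) * Real.log x - Real.log (x + c) ≤
      Real.log (Real.Gamma (x + c)) - Real.log (Real.Gamma x) := by
  have hshift := mul_log_le_log_Gamma_add_one_add_sub hx hc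
  rw [add_right_comm, log_Gamma_add_one (add_pos hx hc), log_Gamma_add_one hx] at hshift
  linarith

end GammaIncrement

theorem measurable_Gamma : Measurable Real.Gamma :=
  Complex.measurable_re.comp (Meromorphic.Gamma.measurable.comp Complex.measurable_ofReal)

section LogIntegrability

variable {Ω : Type*} [MeasurableSpace Ω] {μ : Measure Ω} {X : Ω → ℝ}

theorem aemeasurable_of_aemeasurable_log (hX : ∀ᵐ ω ∂μ, 0 < X ω)
    (hlog : AEMeasurable (fun ω => Real.log (X ω)) μ) : AEMeasurable X μ := by
  refine hlog.exp.congr ?_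
  filter_upwards [hX] with ω hω using Real.exp_log hω

theorem integrable_log_of_ae_ge [IsFiniteMeasure μ] {a : ℝ} (ha : 0 < a)
    (hX : ∀ᵐ ω ∂μ, a ≤ X ω) (hint : Integrable X μ) :
    Integrable (fun ω => Real.log (X ω)) μ := by
  refine integrable_of_le_of_le hint.aemeasurable.log.aestronglyMeasurable
    ?_ ?_ (integrable_const (Real.log a)) hint
  · filter_upwards [hX] with ω hω using Real.log_le_log ha hω
  · filter_upwards [hX] with ω hω using Real.log_le_self (ha.le.trans hω)

theorem integrable_log_add_const [IsFiniteMeasure μ] (hX : ∀ᵐ ω ∂μ, 0 < X ω)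
    (hlog : Integrable (fun ω => Real.log (X ω)) μ) {c : ℝ} (hc : 0 ≤ c) :
    Integrable (fun ω => Real.log (X ω + c)) μ := by
  have hmeas : AEMeasurable X μ := aemeasurable_of_aemeasurable_log hX hlog.aemeasurable
  have hposLog : Integrable (fun ω => Real.posLog (X ω)) μ := by
    simpa only [Real.posLog_apply, max_comm] using hlog.pos_part
  refine integrable_of_le_of_le (hmeas.add_const c).log.aestronglyMeasurable ?_ ?_ hlog
    (((integrable_const (Real.log 2)).add hposLog).add (integrable_const (Real.posLog c)))
  · filter_upwards [hX] with ω hω using Real.log_le_log hω (le_add_of_nonneg_right hc)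
  · exact ae_of_all _ fun ω => (le_max_right _ _).trans Real.posLog_add

end LogIntegrability

theorem logGamma_diff_integrable_general {Ω : Type*} [MeasurableSpace Ω] {μ : Measure Ω}
    [IsFiniteMeasure μ] {X : Ω → ℝ} (hX : ∀ᵐ ω ∂μ, 0 < X ω)
    (hlog : Integrable (fun ω => Real.log (X ω)) μ) {c : ℝ} (hc : 0 < c) :
    Integrable (fun ω => Real.log (Real.Gamma (X ω + c)) - Real.log (Real.Gamma (X ω))) μ := by
  have hXmeas : AEMeasurable X μ := aemeasurable_of_aemeasurable_log hX hlog.aemeasurable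
  have hlogc : Integrable (fun ω => Real.log (X ω + c)) μ :=
    integrable_log_add_const hX hlog hc.le
  have hmeas : AEMeasurable
      (fun ω => Real.log (Real.Gamma (X ω + c)) - Real.log (Real.Gamma (X ω))) μ :=
    (measurable_Gamma.comp_aemeasurable (hXmeas.add_const c)).log.sub
      (measurable_Gamma.comp_aemeasurable hXmeas).log
  refine integrable_of_le_of_le hmeas.aestronglyMeasurable ?_ ?_
    ((hlog.const_mul (c + 1)).sub hlogc) (hlogc.const_mul c)
  · filter_upwards [hX] with ω hω using le_log_Gamma_add_sub_log_Gamma hω hc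
  · filter_upwards [hX] with ω hω using log_Gamma_add_sub_log_Gamma_le hω hc

theorem logGamma_diff_integrable {Ω : Type*} [MeasurableSpace Ω] (μ : Measure Ω)
    [IsProbabilityMeasure μ] (X : Ω → ℝ) (xbar : ℝ) (hxbar : 0 < xbar)
    (hX : ∀ᵐ ω ∂μ, xbar ≤ X ω) (hint : Integrable X μ) (c : ℝ) (hc : 0 < c) :
    Integrable (fun ω => Real.log (Real.Gamma (X ω + c)) - Real.log (Real.Gamma (X ω))) μ :=
  logGamma_diff_integrable_general (hX.mono fun _ => hxbar.trans_le)
    (integrable_log_of_ae_ge hxbar hX hint) hc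
end

section
/- Let r > 0, α > 1, γ = (α−1)/r and c̄ > 0. Then for every λ ≥ c̄ and every y ∈ ℕ, the derivative of the log beta negative binomial pmf with respect to λ is uniformly bounded: γ·(ψ(γλ+y+α+r) − ψ(γλ+y) + ψ(γλ+α) − ψ(γλ)) ≤ (2α+2+r)/c̄, and this quantity is nonnegative; in particular |(d/dλ) log p(y; λ, r, α)| ≤ (2α+2+r)/c̄. -/
noncomputable def betaFn (a b : ℝ) : ℝ := Real.Gamma a * Real.Gamma b / Real.Gamma (a + b)

noncomputable def bnbPmf (lam r a : ℝ) (y : ℕ) : ℝ :=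
  Real.Gamma ((y : ℝ) + r) / (Real.Gamma ((y : ℝ) + 1) * Real.Gamma r) *
    (betaFn (a + r) ((a - 1) * lam / r + (y : ℝ)) / betaFn a ((a - 1) * lam / r))

noncomputable def digamma (x : ℝ) : ℝ := deriv (fun t => Real.log (Real.Gamma t)) x

/-!
The derivative of the log pmf is `γ` times a difference of two digamma increments
`ψ (x + s) - ψ x`, one from each Beta factor. Log-convexity of `Γ` makes `ψ` increasing, so both
increments are nonnegative and their sum dominates the absolute value of their difference.
Rounding `s` up to an integer and iterating `ψ (x + 1) = ψ x + 1 / x` bounds an increment by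
`(s + 1) / x`; the base points are at least `γ * lam`, so the factor `γ` cancels.
-/

open Real Set

section Digamma

variable {x s : ℝ}

lemma differentiableAt_log_Gamma (hx : 0 < x) :
    DifferentiableAt ℝ (fun t => log (Gamma t)) x :=
  (differentiableOn_Gamma_Ioi.differentiableAt (Ioi_mem_nhds hx)).log (Gamma_pos_of_pos hx).ne'

lemma hasDerivAt_log_Gamma (hx : 0 < x) :
    HasDerivAt (fun t => log (Gamma t)) (digamma x) x :=
  (differentiableAt_log_Gamma hx).hasDerivAt

lemma monotoneOn_digamma : MonotoneOn digamma (Ioi 0) :=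
  convexOn_log_Gamma.monotoneOn_deriv fun _ hx => differentiableAt_log_Gamma hx

lemma digamma_add_one (hx : 0 < x) : digamma (x + 1) = digamma x + 1 / x := by
  have h_shift : HasDerivAt (fun t => log (Gamma (t + 1))) (digamma (x + 1)) x :=
    (hasDerivAt_log_Gamma (by positivity)).comp_add_const x 1
  have h_split : HasDerivAt (fun t => log (Gamma t) + log t) (digamma x + 1 / x) x := by
    simpa only [one_div] using (hasDerivAt_log_Gamma hx).fun_add (hasDerivAt_log hx.ne')
  refine h_shift.unique (h_split.congr_of_eventuallyEq ?_)
  filter_upwards [eventually_gt_nhds hx] with t ht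
  rw [Gamma_add_one ht.ne', log_mul ht.ne' (Gamma_pos_of_pos ht).ne', add_comm]

lemma digamma_add_natCast (hx : 0 < x) (n : ℕ) :
    digamma (x + n) = digamma x + ∑ k ∈ Finset.range n, 1 / (x + k) := by
  induction n with
  | zero => simp
  | succ n ih =>
    rw [Nat.cast_succ, ← add_assoc, digamma_add_one (by positivity), ih, Finset.sum_range_succ,
      add_assoc]

lemma digamma_add_natCast_le (hx : 0 < x) (n : ℕ) : digamma (x + n) ≤ digamma x + n / x := by
  have h_term : ∀ k ∈ Finset.range n, 1 / (x + k) ≤ 1 / x := fun k _ => by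
    gcongr
    exact le_add_of_nonneg_right k.cast_nonneg
  have h_sum := Finset.sum_le_card_nsmul _ _ _ h_term
  rw [Finset.card_range, nsmul_eq_mul, mul_one_div] at h_sum
  rw [digamma_add_natCast hx]
  gcongr

lemma digamma_add_sub_nonneg (hx : 0 < x) (hs : 0 ≤ s) : 0 ≤ digamma (x + s) - digamma x :=
  sub_nonneg.2 <| monotoneOn_digamma hx (add_pos_of_pos_of_nonneg hx hs)
    (le_add_of_nonneg_right hs)

lemma digamma_add_sub_le (hx : 0 < x) (hs : 0 ≤ s) :
    digamma (x + s) - digamma x ≤ (s + 1) / x := by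
  rw [sub_le_iff_le_add']
  calc
    digamma (x + s) ≤ digamma (x + ⌈s⌉₊) :=
      monotoneOn_digamma (add_pos_of_pos_of_nonneg hx hs)
        (add_pos_of_pos_of_nonneg hx (Nat.cast_nonneg _)) (by gcongr; exact Nat.le_ceil s)
    _ ≤ digamma x + ⌈s⌉₊ / x := digamma_add_natCast_le hx _
    _ ≤ digamma x + (s + 1) / x := by gcongr; exact (Nat.ceil_lt_add_one hs).le

lemma digamma_sub_add_digamma_sub_le {y p q : ℝ} (hx : 0 < x) (hy : 0 ≤ y) (hp : 0 ≤ p)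
    (hq : 0 ≤ q) :
    (digamma (x + y + p) - digamma (x + y)) + (digamma (x + q) - digamma x) ≤
      (p + q + 2) / x :=
  calc
    _ ≤ (p + 1) / (x + y) + (q + 1) / x :=
      add_le_add (digamma_add_sub_le (by positivity) hp) (digamma_add_sub_le hx hq)
    _ ≤ (p + 1) / x + (q + 1) / x := by gcongr; exact le_add_of_nonneg_right hy
    _ = (p + q + 2) / x := by ring

end Digamma

section Beta

variable {a b : ℝ}

lemma betaFn_pos (ha : 0 < a) (hb : 0 < b) : 0 < betaFn a b :=
  ProbabilityTheory.beta_pos ha hb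

lemma log_betaFn (ha : 0 < a) (hb : 0 < b) :
    log (betaFn a b) = log (Gamma a) + log (Gamma b) - log (Gamma (a + b)) := by
  have ha_ne := (Gamma_pos_of_pos ha).ne'
  have hb_ne := (Gamma_pos_of_pos hb).ne'
  rw [betaFn, log_div (mul_ne_zero ha_ne hb_ne) (Gamma_pos_of_pos (add_pos ha hb)).ne',
    log_mul ha_ne hb_ne]

lemma hasDerivAt_log_betaFn_right (ha : 0 < a) (hb : 0 < b) :
    HasDerivAt (fun t => log (betaFn a t)) (digamma b - digamma (b + a)) b := by
  rw [add_comm b a]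
  have h_logs := ((hasDerivAt_log_Gamma hb).const_add (log (Gamma a))).fun_sub
    ((hasDerivAt_log_Gamma (add_pos ha hb)).comp_const_add a b)
  refine h_logs.congr_of_eventuallyEq ?_
  filter_upwards [eventually_gt_nhds hb] with t ht using log_betaFn ha ht

lemma hasDerivAt_log_const_mul_betaFn_div_betaFn {c p q x y : ℝ} (hc : c ≠ 0) (hp : 0 < p)
    (hq : 0 < q) (hx : 0 < x) (hy : 0 ≤ y) :
    HasDerivAt (fun t => log (c * (betaFn p (t + y) / betaFn q t)))
      ((digamma (x + q) - digamma x) - (digamma (x + y + p) - digamma (x + y))) x := by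
  have h_num : HasDerivAt (fun t => log (betaFn p (t + y)))
      (digamma (x + y) - digamma (x + y + p)) x :=
    (hasDerivAt_log_betaFn_right hp (by positivity)).comp_add_const x y
  have h_logs := (h_num.fun_sub (hasDerivAt_log_betaFn_right hq hx)).const_add (log c)
  refine (h_logs.congr_of_eventuallyEq ?_).congr_deriv (by ring)
  filter_upwards [eventually_gt_nhds hx] with t ht
  have h_num_ne := (betaFn_pos hp (add_pos_of_pos_of_nonneg ht hy)).ne'
  have h_den_ne := (betaFn_pos hq ht).ne'
  rw [log_mul hc (div_ne_zero h_num_ne h_den_ne), log_div h_num_ne h_den_ne]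

end Beta

lemma hasDerivAt_log_bnbPmf {lam r a : ℝ} (hr : 0 < r) (ha : 0 < a)
    (hx : 0 < (a - 1) / r * lam) (y : ℕ) :
    HasDerivAt (fun l => log (bnbPmf l r a y))
      ((a - 1) / r * ((digamma ((a - 1) / r * lam + a) - digamma ((a - 1) / r * lam)) -
        (digamma ((a - 1) / r * lam + y + (a + r)) - digamma ((a - 1) / r * lam + y)))) lam := by
  have h_coeff : Gamma (y + r) / (Gamma (y + 1) * Gamma r) ≠ 0 := by positivity
  have h_beta := hasDerivAt_log_const_mul_betaFn_div_betaFn h_coeff (add_pos ha hr) ha hx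
    y.cast_nonneg
  simp only [bnbPmf, mul_div_right_comm (a - 1)]
  exact (h_beta.comp lam (hasDerivAt_const_mul ((a - 1) / r))).congr_deriv (mul_comm _ _)

theorem bnb_log_deriv_lam_bound (r a cbar : ℝ) (hr : 0 < r) (ha : 1 < a) (hcbar : 0 < cbar) :
    ∀ lam : ℝ, cbar ≤ lam → ∀ y : ℕ,
      (0 ≤ ((a - 1) / r) *
          (digamma (((a - 1) / r) * lam + (y : ℝ) + a + r) - digamma (((a - 1) / r) * lam + (y : ℝ)) +
            digamma (((a - 1) / r) * lam + a) - digamma (((a - 1) / r) * lam)) ∧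
        ((a - 1) / r) *
            (digamma (((a - 1) / r) * lam + (y : ℝ) + a + r) - digamma (((a - 1) / r) * lam + (y : ℝ)) +
              digamma (((a - 1) / r) * lam + a) - digamma (((a - 1) / r) * lam)) ≤
          (2 * a + 2 + r) / cbar) ∧
      |deriv (fun l => Real.log (bnbPmf l r a y)) lam| ≤ (2 * a + 2 + r) / cbar := by
  intro lam hlam y
  have hlam_pos : 0 < lam := hcbar.trans_le hlam
  have ha_pos : 0 < a := one_pos.trans ha
  have hγ : 0 < (a - 1) / r := div_pos (sub_pos.2 ha) hr
  have hx : 0 < (a - 1) / r * lam := mul_pos hγ hlam_pos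
  rw [(hasDerivAt_log_bnbPmf hr ha_pos hx y).deriv, abs_mul, abs_of_pos hγ, add_sub_assoc,
    add_assoc _ a r]
  generalize (a - 1) / r = γ at *
  have h_num := digamma_add_sub_nonneg (x := γ * lam + y) (by positivity) (add_pos ha_pos hr).le
  have h_den := digamma_add_sub_nonneg hx ha_pos.le
  have h_sum := digamma_sub_add_digamma_sub_le hx y.cast_nonneg (add_pos ha_pos hr).le
    ha_pos.le
  set num := digamma (γ * lam + y + (a + r)) - digamma (γ * lam + y)
  set den := digamma (γ * lam + a) - digamma (γ * lam)
  have h_upper : γ * (num + den) ≤ (2 * a + 2 + r) / cbar :=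
    calc
      γ * (num + den) ≤ γ * ((a + r + a + 2) / (γ * lam)) := by gcongr
      _ = (2 * a + 2 + r) / lam := by field_simp; ring
      _ ≤ (2 * a + 2 + r) / cbar := by gcongr
  have h_abs : |den - num| ≤ num + den := abs_le.2 ⟨by linarith, by linarith⟩
  exact ⟨⟨by positivity, h_upper⟩, (mul_le_mul_of_nonneg_left h_abs hγ.le).trans h_upper⟩
end
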